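/- For sufficiently large ρ the following holds: if V ∈ 𝒱(r,n) with n ≤ d, ξ ∈ Ξ(V), and ν = ξ_{V^⊥} is the orthogonal projection of ξ onto V^⊥, then ξ + tν ∈ Ξ(V) for all t ≥ 0. -/

import Mathlib

noncomputable section

open Set Submodule Module MeasureTheory Relation
open scoped RealInnerProductSpace

variable {d : ℕ}

/-- The lattice Γ generated over ℤ by the basis `B` of ℝ^d. -/
def latticeOf (B : Basis (Fin d) ℝ (EuclideanSpace ℝ (Fin d))) :
    Submodule ℤ (EuclideanSpace ℝ (Fin d)) :=
  Submodule.span ℤ (Set.range B)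

/-- The determinant d(Γ) of the lattice generated by `B`. -/
def latDet (B : Basis (Fin d) ℝ (EuclideanSpace ℝ (Fin d))) : ℝ :=
  |(EuclideanSpace.basisFun (Fin d) ℝ).toBasis.det (fun i => B i)|

/-- The dual lattice Γ† = {θ : θ·g ∈ 2πℤ for all g ∈ Γ}. -/
def dualLattice (B : Basis (Fin d) ℝ (EuclideanSpace ℝ (Fin d))) :
    Set (EuclideanSpace ℝ (Fin d)) :=
  {θ | ∀ g ∈ latticeOf B, ∃ k : ℤ, ⟪θ, g⟫ = 2 * Real.pi * k}

/-- Θ_r : nonzero dual lattice vectors of norm at most r. -/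
def Theta (B : Basis (Fin d) ℝ (EuclideanSpace ℝ (Fin d))) (r : ℝ) :
    Set (EuclideanSpace ℝ (Fin d)) :=
  {θ | θ ∈ dualLattice B ∧ θ ≠ 0 ∧ ‖θ‖ ≤ r}

/-- Θ_r⁰ : dual lattice vectors of norm at most r (including 0). -/
def Theta0 (B : Basis (Fin d) ℝ (EuclideanSpace ℝ (Fin d))) (r : ℝ) :
    Set (EuclideanSpace ℝ (Fin d)) :=
  {θ | θ ∈ dualLattice B ∧ ‖θ‖ ≤ r}

/-- A lattice r-subspace: a subspace spanned by dual lattice vectors from Θ_r⁰. -/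
def IsLatticeSubspace (B : Basis (Fin d) ℝ (EuclideanSpace ℝ (Fin d))) (r : ℝ)
    (V : Submodule ℝ (EuclideanSpace ℝ (Fin d))) : Prop :=
  ∃ S : Set (EuclideanSpace ℝ (Fin d)), S ⊆ Theta0 B r ∧ V = Submodule.span ℝ S

/-- Orthogonal projection ξ_V onto a subspace, viewed in the ambient space. -/
def projV (V : Submodule ℝ (EuclideanSpace ℝ (Fin d))) (ξ : EuclideanSpace ℝ (Fin d)) :
    EuclideanSpace ℝ (Fin d) :=
  (orthogonalProjection V ξ : EuclideanSpace ℝ (Fin d))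

/-- ω_n: the volume of the unit ball in ℝ^n. -/
def unitBallVol (n : ℕ) : ℝ :=
  (MeasureTheory.volume (Metric.ball (0 : EuclideanSpace ℝ (Fin n)) 1)).toReal

/-- The resonant layer Λ(θ) (= ℝ^d when θ = 0). -/
def layer (ρ a : ℝ) (θ : EuclideanSpace ℝ (Fin d)) : Set (EuclideanSpace ℝ (Fin d)) :=
  {ξ | θ = 0 ∨ |⟪ξ, θ⟫| < ρ ^ a * ‖θ‖}

/-- Υ_θ(ξ): the points θ-resonant congruent to ξ. -/
def upsTheta (ρ a : ℝ) (θ ξ : EuclideanSpace ℝ (Fin d)) : Set (EuclideanSpace ℝ (Fin d)) :=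
  {η | ξ ∈ layer ρ a θ ∧ η ∈ layer ρ a θ ∧ ∃ l : ℤ, ξ - η = (l : ℝ) • θ}

/-- One step of resonant congruence (with some θ ∈ Θ_r⁰). -/
def resStep (B : Basis (Fin d) ℝ (EuclideanSpace ℝ (Fin d))) (ρ a r : ℝ)
    (ξ η : EuclideanSpace ℝ (Fin d)) : Prop :=
  ∃ θ ∈ Theta0 B r, η ∈ upsTheta ρ a θ ξ

/-- Υ(ξ): all points resonant congruent to ξ. -/
def Ups (B : Basis (Fin d) ℝ (EuclideanSpace ℝ (Fin d))) (ρ a r : ℝ)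
    (ξ : EuclideanSpace ℝ (Fin d)) : Set (EuclideanSpace ℝ (Fin d)) :=
  {η | Relation.ReflTransGen (resStep B ρ a r) ξ η}

/-- N(ξ) = Υ(ξ) − ξ. -/
def resN (B : Basis (Fin d) ℝ (EuclideanSpace ℝ (Fin d))) (ρ a r : ℝ)
    (ξ : EuclideanSpace ℝ (Fin d)) : Set (EuclideanSpace ℝ (Fin d)) :=
  {m | ξ + m ∈ Ups B ρ a r ξ}

/-- Ξ₁(V) = {ξ : |ξ_V| < ρ^{α_n}}, n = dim V. -/
def Xi1 (ρ : ℝ) (α : ℕ → ℝ) (V : Submodule ℝ (EuclideanSpace ℝ (Fin d))) :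
    Set (EuclideanSpace ℝ (Fin d)) :=
  {ξ | ‖projV V ξ‖ < ρ ^ α (Module.finrank ℝ V)}

/-- Ξ₂(V) = ∪_{ξ ∈ Ξ₁(V)} Υ(ξ). -/
def Xi2 (B : Basis (Fin d) ℝ (EuclideanSpace ℝ (Fin d))) (ρ r : ℝ) (α : ℕ → ℝ)
    (V : Submodule ℝ (EuclideanSpace ℝ (Fin d))) : Set (EuclideanSpace ℝ (Fin d)) :=
  {η | ∃ ξ ∈ Xi1 ρ α V, η ∈ Ups B ρ (α 1) r ξ}

/-- Ξ(V): Ξ₂(V) minus the Ξ₂(W) for all lattice r-subspaces W of larger dimension. -/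
def Xi (B : Basis (Fin d) ℝ (EuclideanSpace ℝ (Fin d))) (ρ r : ℝ) (α : ℕ → ℝ)
    (V : Submodule ℝ (EuclideanSpace ℝ (Fin d))) : Set (EuclideanSpace ℝ (Fin d)) :=
  Xi2 B ρ r α V \
    ⋃ W ∈ {W : Submodule ℝ (EuclideanSpace ℝ (Fin d)) |
        IsLatticeSubspace B r W ∧ Module.finrank ℝ V < Module.finrank ℝ W},
      Xi2 B ρ r α W

/-- The standing conditions on the parameters ρ ≥ 1, r, κ > 0 and the exponents α_j:
0 = α₀, α_{n+1} > α_n + 2κd², α_d < 1, r ≤ ρ^κ, and r ≥ r₀ (i.e. Θ_r⁰ spans ℝ^d). -/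
def GoodParams (B : Basis (Fin d) ℝ (EuclideanSpace ℝ (Fin d))) (ρ r κ : ℝ)
    (α : ℕ → ℝ) : Prop :=
  1 ≤ ρ ∧ 0 < κ ∧ α 0 = 0 ∧ (∀ n < d, α n + 2 * κ * (d : ℝ) ^ 2 < α (n + 1)) ∧
    α d < 1 ∧ r ≤ ρ ^ κ ∧ Submodule.span ℝ (Theta0 B r) = ⊤

/-!
Expressed in a basis of the dual lattice, `d` linearly independent vectors of `Θ_r` have a nonzero
integer determinant. Hence a vector of `Θ_r⁰` outside a lattice `r`-subspace `U` makes with `U` an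
angle of sine at least `1 / Q`, where `Q` is a power of `ρ` with small exponent.

By induction on `dim U`, resonant chains along vectors of `U` then have a diameter bounded
independently of their length: at the first step along a vector outside a smaller subspace, the
starting point is close to a vector which is nearly orthogonal to the new direction, so that its
projection onto the enlarged subspace is still small. The same holds with the two ends exchanged,
and their difference lies in both subspaces.

The gaps between the exponents absorb these losses. Along the ray `ξ + tν` the projection onto
a subspace `W ⊋ V` can only grow, so the ray does not enter `Ξ₁(W)` if `ξ ∈ Ξ(V)`. A step along a
vector `θ ∉ V` would put a point in `Ξ₁(V ⊔ ℝθ)`; therefore chains from the ray only use vectors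
of `V`, and such chains commute with the translation by `tν ∈ Vᗮ`. Finally, a point of such a
chain in `Ξ₁(U)` with `dim U > dim V` is, after adjoining vectors of `V` to `U`, in `Ξ₁(W)` for
some `W ⊋ V`.
-/

section Projections

variable {E : Type*} [NormedAddCommGroup E] [InnerProductSpace ℝ E]
  {U V W : Submodule ℝ E} [U.HasOrthogonalProjection] [V.HasOrthogonalProjection]
  [W.HasOrthogonalProjection] {x y u θ ν : E} {b M Q t : ℝ}

theorem abs_inner_le_norm_starProjection_mul (x : E) (hu : u ∈ U) :
    |⟪x, u⟫| ≤ ‖U.starProjection x‖ * ‖u‖ := by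
  rw [← starProjection_eq_self_iff.2 hu, ← inner_starProjection_left_eq_right,
    starProjection_eq_self_iff.2 hu]
  exact abs_real_inner_le_norm _ _

theorem norm_starProjection_le_of_abs_inner_le (hM : 0 ≤ M)
    (h : ∀ u ∈ U, |⟪x, u⟫| ≤ M * ‖u‖) : ‖U.starProjection x‖ ≤ M := by
  set p := U.starProjection x
  have hp : p ∈ U := U.starProjection_apply_mem x
  have hsq : ‖p‖ * ‖p‖ ≤ M * ‖p‖ := by
    rw [← real_inner_self_eq_norm_mul_norm]
    calc ⟪p, p⟫ = ⟪x, p⟫ := by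
          rw [inner_starProjection_left_eq_right, starProjection_eq_self_iff.2 hp]
      _ ≤ M * ‖p‖ := (le_abs_self _).trans (h p hp)
  rcases (norm_nonneg p).eq_or_lt with h0 | h0
  · rwa [← h0]
  · exact le_of_mul_le_mul_right hsq h0

theorem norm_starProjection_le_add_norm_sub (U : Submodule ℝ E) [U.HasOrthogonalProjection]
    (x y : E) : ‖U.starProjection x‖ ≤ ‖U.starProjection y‖ + ‖x - y‖ := by
  calc ‖U.starProjection x‖ = ‖U.starProjection y + U.starProjection (x - y)‖ := by
        rw [← map_add, add_sub_cancel]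
    _ ≤ ‖U.starProjection y‖ + ‖x - y‖ :=
        (norm_add_le _ _).trans (by gcongr; exact U.norm_starProjection_apply_le _)

theorem norm_starProjection_le_of_le (hVW : V ≤ W) (x : E) :
    ‖V.starProjection x‖ ≤ ‖W.starProjection x‖ := by
  rw [← starProjection_comp_starProjection_of_le hVW]
  exact V.norm_starProjection_apply_le _

theorem starProjection_add_smul_sub_starProjection (V : Submodule ℝ E)
    [V.HasOrthogonalProjection] (x y : E) (t : ℝ) :
    V.starProjection (y + t • (x - V.starProjection x)) = V.starProjection y := by
  simp [starProjection_eq_self_iff.2 (V.starProjection_apply_mem x)]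

theorem sub_starProjection_eq_of_sub_mem (h : y - x ∈ V) :
    y - V.starProjection y = x - V.starProjection x := by
  have hfix := starProjection_eq_self_iff.2 h
  rw [map_sub] at hfix
  rw [sub_eq_sub_iff_sub_eq_sub, hfix]

theorem norm_starProjection_le_add_smul_sub (hVW : V ≤ W) (x : E) (ht : 0 ≤ t) :
    ‖W.starProjection x‖ ≤ ‖W.starProjection (x + t • (x - V.starProjection x))‖ := by
  set y := x + t • (x - V.starProjection x) with hy
  have hcomb : (1 + t) • W.starProjection x = W.starProjection y + t • V.starProjection y := by
    have hWV : W.starProjection (V.starProjection x) = V.starProjection x :=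
      starProjection_eq_self_iff.2 (hVW (V.starProjection_apply_mem x))
    rw [hy, starProjection_add_smul_sub_starProjection, map_add, map_smul, map_sub, hWV]
    module
  have hmul : (1 + t) * ‖W.starProjection x‖ ≤ (1 + t) * ‖W.starProjection y‖ := by
    calc (1 + t) * ‖W.starProjection x‖ = ‖(1 + t) • W.starProjection x‖ := by
          rw [norm_smul, Real.norm_of_nonneg (by positivity)]
      _ ≤ ‖W.starProjection y‖ + t * ‖V.starProjection y‖ := by
          rw [hcomb, ← norm_smul_of_nonneg ht]
          exact norm_add_le _ _
      _ ≤ ‖W.starProjection y‖ + t * ‖W.starProjection y‖ := by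
          gcongr
          exact norm_starProjection_le_of_le hVW y
      _ = (1 + t) * ‖W.starProjection y‖ := by ring
  exact le_of_mul_le_mul_left hmul (by positivity)

theorem norm_starProjection_sup_le_add_of_isOrtho [(U ⊔ V).HasOrthogonalProjection]
    (hUV : U ⟂ V) (x : E) :
    ‖(U ⊔ V).starProjection x‖ ≤ ‖U.starProjection x‖ + ‖V.starProjection x‖ := by
  have hsum : (U ⊔ V).starProjection x = U.starProjection x + V.starProjection x := by
    refine eq_starProjection_of_mem_orthogonal
      (add_mem_sup (U.starProjection_apply_mem x) (V.starProjection_apply_mem x)) ?_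
    rw [← inf_orthogonal, mem_inf]
    constructor
    · rw [← sub_sub]
      exact sub_mem (U.sub_starProjection_mem_orthogonal x)
        (hUV.symm.le (V.starProjection_apply_mem x))
    · rw [add_comm, ← sub_sub]
      exact sub_mem (V.sub_starProjection_mem_orthogonal x) (hUV.le (U.starProjection_apply_mem x))
  exact hsum ▸ norm_add_le _ _

theorem norm_starProjection_span_singleton_le (hM : 0 ≤ M) (h : |⟪x, θ⟫| ≤ M * ‖θ‖) :
    ‖(span ℝ {θ}).starProjection x‖ ≤ M := by
  refine norm_starProjection_le_of_abs_inner_le hM fun u hu => ?_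
  obtain ⟨c, rfl⟩ := mem_span_singleton.1 hu
  calc |⟪x, c • θ⟫| = |c| * |⟪x, θ⟫| := by rw [real_inner_smul_right, abs_mul]
    _ ≤ |c| * (M * ‖θ‖) := by gcongr
    _ = M * ‖c • θ‖ := by rw [norm_smul, Real.norm_eq_abs]; ring

-- `U ⊔ ℝθ` is the orthogonal sum of `U` and the line spanned by `τ = θ - P_U θ`.
theorem norm_starProjection_sup_span_singleton_le
    [(U ⊔ span ℝ {θ}).HasOrthogonalProjection] (hQ : 0 ≤ Q)
    (hθ : ‖θ‖ ≤ Q * ‖θ - U.starProjection θ‖) (hb : 0 ≤ b) (hxθ : |⟪x, θ⟫| ≤ b * ‖θ‖) :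
    ‖(U ⊔ span ℝ {θ}).starProjection x‖
      ≤ ‖U.starProjection x‖ + Q * (‖U.starProjection x‖ + b) := by
  set τ := θ - U.starProjection θ with hτ
  have hsup : U ⊔ span ℝ {θ} = U ⊔ span ℝ {τ} := by
    have hPθ := U.starProjection_apply_mem θ
    refine le_antisymm (sup_le le_sup_left ?_) (sup_le le_sup_left ?_) <;>
      rw [span_singleton_le_iff_mem]
    · rw [← add_sub_cancel (U.starProjection θ) θ]
      exact add_mem_sup hPθ (mem_span_singleton_self τ)
    · exact sub_mem (mem_sup_right (mem_span_singleton_self θ)) (mem_sup_left hPθ)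
  have hortho : U ⟂ span ℝ {τ} := by
    rw [isOrtho_comm, Submodule.IsOrtho, span_singleton_le_iff_mem]
    exact U.sub_starProjection_mem_orthogonal θ
  have hxτ : |⟪x, τ⟫| ≤ Q * (‖U.starProjection x‖ + b) * ‖τ‖ := by
    have hproj : |⟪x, U.starProjection θ⟫| ≤ ‖U.starProjection x‖ * ‖θ‖ :=
      (abs_inner_le_norm_starProjection_mul x (U.starProjection_apply_mem θ)).trans
        (by gcongr; exact U.norm_starProjection_apply_le θ)
    calc |⟪x, τ⟫| ≤ |⟪x, θ⟫| + |⟪x, U.starProjection θ⟫| := by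
          rw [hτ, inner_sub_right]; exact abs_sub _ _
      _ ≤ (‖U.starProjection x‖ + b) * ‖θ‖ := by linarith
      _ ≤ (‖U.starProjection x‖ + b) * (Q * ‖τ‖) := by gcongr
      _ = Q * (‖U.starProjection x‖ + b) * ‖τ‖ := by ring
  have : (U ⊔ span ℝ {τ}).HasOrthogonalProjection := hsup ▸ inferInstance
  simp only [hsup]
  refine (norm_starProjection_sup_le_add_of_isOrtho hortho x).trans ?_
  gcongr
  exact norm_starProjection_span_singleton_le (by positivity) hxτ

theorem norm_starProjection_sup_span_singleton_le_of_norm_sub_le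
    [(U ⊔ span ℝ {θ}).HasOrthogonalProjection] (hQ : 1 ≤ Q)
    (hθ : ‖θ‖ ≤ Q * ‖θ - U.starProjection θ‖) (hx : ‖U.starProjection x‖ ≤ M)
    (hxy : ‖x - y‖ ≤ 2 * M) (hyθ : |⟪y, θ⟫| ≤ M * ‖θ‖) :
    ‖(U ⊔ span ℝ {θ}).starProjection x‖ ≤ 8 * Q * M := by
  have hM : 0 ≤ M := (norm_nonneg _).trans hx
  have hxθ : |⟪x, θ⟫| ≤ 3 * M * ‖θ‖ := by
    calc |⟪x, θ⟫| = |⟪x - y, θ⟫ + ⟪y, θ⟫| := by rw [← inner_add_left, sub_add_cancel]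
      _ ≤ 2 * M * ‖θ‖ + M * ‖θ‖ := (abs_add_le _ _).trans
          (add_le_add ((abs_real_inner_le_norm _ _).trans (by gcongr)) hyθ)
      _ = 3 * M * ‖θ‖ := by ring
  calc ‖(U ⊔ span ℝ {θ}).starProjection x‖
      ≤ ‖U.starProjection x‖ + Q * (‖U.starProjection x‖ + 3 * M) :=
        norm_starProjection_sup_span_singleton_le (by positivity) hθ (by positivity) hxθ
    _ ≤ M + Q * (M + 3 * M) := by gcongr
    _ ≤ Q * M + Q * (M + 3 * M) := by gcongr; exact le_mul_of_one_le_left hM hQ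
    _ ≤ 8 * Q * M := by linarith [mul_nonneg (zero_le_one.trans hQ) hM]

theorem norm_sub_le_of_norm_starProjection_le (hU : x - y ∈ U) (hV : x - y ∈ V)
    (hx : ‖U.starProjection x‖ ≤ M) (hy : ‖V.starProjection y‖ ≤ M) : ‖x - y‖ ≤ 2 * M := by
  have hsq : ‖x - y‖ * ‖x - y‖ ≤ 2 * M * ‖x - y‖ := by
    calc ‖x - y‖ * ‖x - y‖ = ⟪x, x - y⟫ - ⟪y, x - y⟫ := by
          rw [← inner_sub_left, real_inner_self_eq_norm_mul_norm]
      _ ≤ |⟪x, x - y⟫| + |⟪y, x - y⟫| := (le_abs_self _).trans (abs_sub _ _)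
      _ ≤ M * ‖x - y‖ + M * ‖x - y‖ := by
          gcongr
          · exact (abs_inner_le_norm_starProjection_mul x hU).trans (by gcongr)
          · exact (abs_inner_le_norm_starProjection_mul y hV).trans (by gcongr)
      _ = 2 * M * ‖x - y‖ := by ring
  rcases (norm_nonneg (x - y)).eq_or_lt with h0 | h0
  · rw [← h0]
    linarith [(norm_nonneg _).trans hx]
  · exact le_of_mul_le_mul_right hsq h0

end Projections

section LinearAlgebra

variable {ι 𝕜 E F : Type*}

theorem alternatingMap_map_update_eq_zero_of_mem_span [DecidableEq ι] [CommRing 𝕜]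
    [AddCommGroup E] [Module 𝕜 E] [AddCommGroup F] [Module 𝕜 F] (f : E [⋀^ι]→ₗ[𝕜] F) (v : ι → E)
    {i : ι} {u : E} (hu : u ∈ span 𝕜 (v '' {i}ᶜ)) : f (Function.update v i u) = 0 := by
  suffices span 𝕜 (v '' {i}ᶜ) ≤ LinearMap.ker (f.toMultilinearMap.toLinearMap v i) from this hu
  rw [span_le]
  rintro _ ⟨j, hj, rfl⟩
  exact f.map_update_self v (Ne.symm hj)

theorem norm_map_mul_norm_le_of_mem_span [Fintype ι] [NontriviallyNormedField 𝕜]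
    [SeminormedAddCommGroup E] [NormedSpace 𝕜 E] [SeminormedAddCommGroup F] [NormedSpace 𝕜 F]
    {f : E [⋀^ι]→ₗ[𝕜] F} {K : ℝ} (hf : ∀ v, ‖f v‖ ≤ K * ∏ j, ‖v j‖) (v : ι → E) {i : ι} {u : E}
    (hu : u ∈ span 𝕜 (v '' {i}ᶜ)) : ‖f v‖ * ‖v i‖ ≤ K * ‖v i - u‖ * ∏ j, ‖v j‖ := by
  classical
  have hfv : f v = f (Function.update v i (v i - u)) := by
    rw [f.map_update_sub, Function.update_eq_self,
      alternatingMap_map_update_eq_zero_of_mem_span f v hu, sub_zero]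
  have hprod : ∏ j, ‖Function.update v i (v i - u) j‖
      = ‖v i - u‖ * ∏ j ∈ Finset.univ.erase i, ‖v j‖ := by
    rw [← Finset.mul_prod_erase _ _ (Finset.mem_univ i), Function.update_self]
    congr 1
    exact Finset.prod_congr rfl fun j hj => by
      rw [Function.update_of_ne (Finset.ne_of_mem_erase hj)]
  calc ‖f v‖ * ‖v i‖ ≤ K * (‖v i - u‖ * ∏ j ∈ Finset.univ.erase i, ‖v j‖) * ‖v i‖ := by
        rw [hfv, ← hprod]
        gcongr
        exact hf _
    _ = K * ‖v i - u‖ * ∏ j, ‖v j‖ := by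
        rw [← Finset.mul_prod_erase _ _ (Finset.mem_univ i)]
        ring

theorem exists_basis_of_notMem_span [DivisionRing 𝕜] [AddCommGroup E] [Module 𝕜 E]
    (b : Basis ι 𝕜 E) {S T : Set E} {θ : E} (hS : span 𝕜 S = ⊤) (hTS : T ⊆ S) (hθS : θ ∈ S)
    (hθT : θ ∉ span 𝕜 T) :
    ∃ (v : Basis ι 𝕜 E) (i : ι), range v ⊆ S ∧ v i = θ ∧ span 𝕜 T ≤ span 𝕜 (v '' {i}ᶜ) := by
  obtain ⟨T', hT'T, hspan, hT'⟩ := exists_linearIndependent 𝕜 T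
  have hind : LinearIndepOn 𝕜 id (insert θ T') :=
    LinearIndepOn.insert hT' (by rwa [image_id, hspan])
  have hsub : insert θ T' ⊆ S := insert_subset hθS (hT'T.trans hTS)
  set w := Basis.extendLe hind hsub hS.ge
  set v := w.reindex (w.indexEquiv b)
  have hrange : range v = range w := w.range_reindex _
  have hmem : insert θ T' ⊆ range v := hrange ▸ Basis.subset_extendLe hind hsub hS.ge
  obtain ⟨i, hi⟩ := hmem (mem_insert θ T')
  refine ⟨v, i, hrange ▸ Basis.extendLe_subset hind hsub hS.ge, hi, hspan ▸ span_mono ?_⟩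
  intro u hu
  obtain ⟨j, rfl⟩ := hmem (mem_insert_of_mem θ hu)
  refine ⟨j, ?_, rfl⟩
  rintro rfl
  exact hθT (hi ▸ hspan ▸ subset_span hu)

theorem exists_one_le_forall_norm_det_le [Fintype ι] [DecidableEq ι]
    [NormedAddCommGroup E] [NormedSpace ℝ E] (b : Basis ι ℝ E) :
    ∃ K, 1 ≤ K ∧ ∀ v, ‖b.det v‖ ≤ K * ∏ j, ‖v j‖ := by
  have : FiniteDimensional ℝ E := b.finiteDimensional_of_finite
  have hcont : Continuous b.det := by
    refine Continuous.matrix_det (A := b.toMatrix) ?_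
    exact continuous_matrix fun i j =>
      (b.coord i).continuous_of_finiteDimensional.comp (continuous_apply j)
  obtain ⟨K, -, hK⟩ := b.det.exists_bound_of_continuous hcont
  refine ⟨max K 1, le_max_right _ _, fun v => (hK v).trans ?_⟩
  gcongr
  exact le_max_left _ _

theorem one_le_abs_det_of_mem_span_int [Fintype ι] [DecidableEq ι] [AddCommGroup E] [Module ℝ E]
    (b v : Basis ι ℝ E) (hv : ∀ i, v i ∈ span ℤ (range b)) : 1 ≤ |b.det v| := by
  have hint : ∀ i j, ∃ k : ℤ, (k : ℝ) = b.repr (v j) i := fun i j =>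
    b.mem_span_iff_repr_mem ℤ (v j) |>.1 (hv j) i
  choose N hN using hint
  have hdet : b.det v = ((Matrix.of N).det : ℤ) := by
    rw [Basis.det_apply, Int.cast_det]
    congr 1
    ext i j
    exact (hN i j).symm
  rw [hdet]
  exact_mod_cast Int.one_le_abs fun h0 => (b.isUnit_det v).ne_zero (by rw [hdet, h0, Int.cast_zero])

end LinearAlgebra

section DualLattice

/-- The pairing `⟪x, y⟫ / 2π`, under which the dual lattice is the set of vectors pairing
integrally with the lattice. -/
def latticePairing (d : ℕ) : LinearMap.BilinForm ℝ (EuclideanSpace ℝ (Fin d)) :=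
  (2 * Real.pi)⁻¹ • innerₗ _

theorem latticePairing_apply (x y : EuclideanSpace ℝ (Fin d)) :
    latticePairing d x y = (2 * Real.pi)⁻¹ * ⟪x, y⟫ := rfl

theorem latticePairing_nondegenerate (d : ℕ) : (latticePairing d).Nondegenerate := by
  have hself : ∀ x, latticePairing d x x = 0 → x = 0 := fun x hx => by
    simpa [latticePairing_apply, Real.pi_ne_zero] using hx
  exact ⟨fun x hx => hself x (hx x), fun x hx => hself x (hx x)⟩

variable {B : Basis (Fin d) ℝ (EuclideanSpace ℝ (Fin d))} {r R Q : ℝ}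
  {U : Submodule ℝ (EuclideanSpace ℝ (Fin d))} {θ : EuclideanSpace ℝ (Fin d)}

/-- The reciprocal basis `D` of `B`, determined by `⟪D i, B j⟫ = 2π δᵢⱼ`; it generates the dual
lattice. -/
def reciprocalBasis (B : Basis (Fin d) ℝ (EuclideanSpace ℝ (Fin d))) :
    Basis (Fin d) ℝ (EuclideanSpace ℝ (Fin d)) :=
  (latticePairing d).dualBasis (latticePairing_nondegenerate d) B

theorem dualLattice_eq_span_reciprocalBasis (B : Basis (Fin d) ℝ (EuclideanSpace ℝ (Fin d))) :
    dualLattice B = (span ℤ (range (reciprocalBasis B)) : Set (EuclideanSpace ℝ (Fin d))) := by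
  rw [reciprocalBasis, ← LinearMap.BilinForm.dualSubmodule_span_of_basis]
  ext θ
  refine forall₂_congr fun g _ => ?_
  simp only [latticePairing_apply, Submodule.mem_one, algebraMap_int_eq, eq_intCast]
  refine exists_congr fun k => ?_
  rw [eq_comm, eq_inv_mul_iff_mul_eq₀ (by positivity)]

theorem span_Theta0_eq_top (h : ∀ i, ‖reciprocalBasis B i‖ ≤ r) : span ℝ (Theta0 B r) = ⊤ := by
  refine eq_top_mono (span_mono ?_) (reciprocalBasis B).span_eq
  rintro _ ⟨i, rfl⟩
  refine ⟨?_, h i⟩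
  rw [dualLattice_eq_span_reciprocalBasis]
  exact subset_span (mem_range_self i)

theorem Theta0_mono (h : r ≤ R) : Theta0 B r ⊆ Theta0 B R :=
  fun _ hθ => ⟨hθ.1, hθ.2.trans h⟩

theorem IsLatticeSubspace.mono (h : r ≤ R) (hU : IsLatticeSubspace B r U) :
    IsLatticeSubspace B R U := by
  obtain ⟨S, hS, rfl⟩ := hU
  exact ⟨S, hS.trans (Theta0_mono h), rfl⟩

theorem IsLatticeSubspace.bot : IsLatticeSubspace B r ⊥ :=
  ⟨∅, empty_subset _, span_empty.symm⟩

theorem IsLatticeSubspace.sup_span_singleton (hU : IsLatticeSubspace B r U)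
    (hθ : θ ∈ Theta0 B r) : IsLatticeSubspace B r (U ⊔ span ℝ {θ}) := by
  obtain ⟨S, hS, rfl⟩ := hU
  exact ⟨S ∪ {θ}, union_subset hS (singleton_subset_iff.2 hθ), (span_union S {θ}).symm⟩

theorem IsLatticeSubspace.exists_mem_Theta0_notMem (hU : IsLatticeSubspace B r U)
    {W : Submodule ℝ (EuclideanSpace ℝ (Fin d))} (h : ¬ U ≤ W) :
    ∃ θ ∈ Theta0 B r, θ ∈ U ∧ θ ∉ W := by
  obtain ⟨S, hS, rfl⟩ := hU
  obtain ⟨θ, hθS, hθW⟩ := not_subset.1 (mt span_le.2 h)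
  exact ⟨θ, hS hθS, subset_span hθS, hθW⟩

/-- `AngleBound B r Q` says that the distance from a vector `θ` of `Θ_r⁰` to a lattice
`r`-subspace not containing it is at least `‖θ‖ / Q`. -/
structure AngleBound (B : Basis (Fin d) ℝ (EuclideanSpace ℝ (Fin d))) (r Q : ℝ) : Prop where
  one_le : 1 ≤ Q
  norm_le : ∀ U, IsLatticeSubspace B r U → ∀ θ ∈ Theta0 B r, θ ∉ U → ‖θ‖ ≤ Q * ‖θ - projV U θ‖

theorem AngleBound.mono (h : AngleBound B R Q) (hr : r ≤ R) : AngleBound B r Q where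
  one_le := h.one_le
  norm_le U hU θ hθ hθU := h.norm_le U (hU.mono hr) θ (Theta0_mono hr hθ) hθU

-- Extend `θ` by a basis of `U` to a basis `v` of `ℝ^d` in `Θ_r⁰`. Its determinant in the
-- reciprocal basis is a nonzero integer, and it is unchanged if `θ` is replaced by `θ - P_U θ`.
theorem exists_eventually_angleBound (B : Basis (Fin d) ℝ (EuclideanSpace ℝ (Fin d))) :
    ∃ K : ℝ, ∀ᶠ R : ℝ in Filter.atTop, AngleBound B R (K * R ^ d) := by
  obtain ⟨K, hK, hdet⟩ := exists_one_le_forall_norm_det_le (reciprocalBasis B)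
  refine ⟨K, ?_⟩
  filter_upwards [Filter.eventually_ge_atTop 1, Filter.eventually_all.2 fun i =>
    Filter.eventually_ge_atTop ‖reciprocalBasis B i‖] with R hR hD
  refine ⟨one_le_mul_of_one_le_of_one_le hK (one_le_pow₀ hR), ?_⟩
  rintro U ⟨T, hT, rfl⟩ θ hθ hθT
  obtain ⟨v, i, hv, rfl, hTv⟩ := exists_basis_of_notMem_span (reciprocalBasis B)
    (span_Theta0_eq_top hD) hT hθ hθT
  have hvR : ∀ j, v j ∈ Theta0 B R := fun j => hv (mem_range_self j)
  have hone : 1 ≤ ‖(reciprocalBasis B).det v‖ :=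
    one_le_abs_det_of_mem_span_int _ v fun j => by
      rw [← SetLike.mem_coe, ← dualLattice_eq_span_reciprocalBasis]
      exact (hvR j).1
  set u := projV (span ℝ T) (v i)
  have hu : u ∈ span ℝ (v '' {i}ᶜ) := hTv (starProjection_apply_mem _ _)
  calc ‖v i‖ ≤ ‖(reciprocalBasis B).det v‖ * ‖v i‖ := le_mul_of_one_le_left (norm_nonneg _) hone
    _ ≤ K * ‖v i - u‖ * ∏ j, ‖v j‖ := norm_map_mul_norm_le_of_mem_span hdet v hu
    _ ≤ K * ‖v i - u‖ * ∏ _j : Fin d, R := by gcongr with j; exact (hvR j).2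
    _ = K * R ^ d * ‖v i - u‖ := by rw [Finset.prod_const, Finset.card_fin]; ring

end DualLattice

section Chains

/-- One step of resonant congruence along a vector of `Θ_r⁰` lying in `U`. -/
def resStepIn (B : Basis (Fin d) ℝ (EuclideanSpace ℝ (Fin d))) (ρ a r : ℝ)
    (U : Submodule ℝ (EuclideanSpace ℝ (Fin d))) (x y : EuclideanSpace ℝ (Fin d)) : Prop :=
  ∃ θ ∈ Theta0 B r, θ ∈ U ∧ y ∈ upsTheta ρ a θ x

/-- The part of `Υ(x)` reached by chains of resonant congruences along vectors of `Θ_r⁰ ∩ U`. -/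
def UpsIn (B : Basis (Fin d) ℝ (EuclideanSpace ℝ (Fin d))) (ρ a r : ℝ)
    (U : Submodule ℝ (EuclideanSpace ℝ (Fin d))) (x : EuclideanSpace ℝ (Fin d)) :
    Set (EuclideanSpace ℝ (Fin d)) :=
  {y | ReflTransGen (resStepIn B ρ a r U) x y}

variable {B : Basis (Fin d) ℝ (EuclideanSpace ℝ (Fin d))} {ρ a r Q : ℝ}
  {U V W : Submodule ℝ (EuclideanSpace ℝ (Fin d))} {x y z θ ν : EuclideanSpace ℝ (Fin d)}

theorem mem_upsTheta_symm (h : y ∈ upsTheta ρ a θ x) : x ∈ upsTheta ρ a θ y := by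
  obtain ⟨hx, hy, l, hl⟩ := h
  exact ⟨hy, hx, -l, by rw [← neg_sub, hl, Int.cast_neg, neg_smul]⟩

theorem abs_inner_lt_of_mem_upsTheta (hθ : θ ≠ 0) (h : y ∈ upsTheta ρ a θ x) :
    |⟪x, θ⟫| < ρ ^ a * ‖θ‖ :=
  h.1.resolve_left hθ

theorem sub_mem_of_mem_upsTheta (hθ : θ ∈ U) (h : y ∈ upsTheta ρ a θ x) : y - x ∈ U := by
  obtain ⟨-, -, l, hl⟩ := h
  rw [← neg_sub, hl]
  exact U.neg_mem (U.smul_mem _ hθ)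

theorem add_mem_upsTheta_add_iff (hν : ⟪ν, θ⟫ = 0) :
    y + ν ∈ upsTheta ρ a θ (x + ν) ↔ y ∈ upsTheta ρ a θ x := by
  simp only [upsTheta, layer, mem_ofPred_eq, inner_add_left, hν, add_zero, add_sub_add_right_eq_sub]

instance resStep.stdSymm : Std.Symm (resStep B ρ a r) where
  symm _ _ := fun ⟨θ, hθ, h⟩ => ⟨θ, hθ, mem_upsTheta_symm h⟩

instance resStepIn.stdSymm : Std.Symm (resStepIn B ρ a r U) where
  symm _ _ := fun ⟨θ, hθ, hU, h⟩ => ⟨θ, hθ, hU, mem_upsTheta_symm h⟩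

theorem mem_Ups_symm (h : y ∈ Ups B ρ a r x) : x ∈ Ups B ρ a r y :=
  ReflTransGen.stdSymm.symm _ _ h

theorem mem_Ups_trans (hxy : y ∈ Ups B ρ a r x) (hyz : z ∈ Ups B ρ a r y) : z ∈ Ups B ρ a r x :=
  ReflTransGen.trans hxy hyz

theorem mem_UpsIn_symm (h : y ∈ UpsIn B ρ a r U x) : x ∈ UpsIn B ρ a r U y :=
  ReflTransGen.stdSymm.symm _ _ h

theorem UpsIn_subset_Ups : UpsIn B ρ a r U x ⊆ Ups B ρ a r x :=
  fun _ h => h.lift id fun _ _ ⟨θ, hθ, _, h⟩ => ⟨θ, hθ, h⟩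

theorem UpsIn_mono (hUW : U ≤ W) : UpsIn B ρ a r U x ⊆ UpsIn B ρ a r W x :=
  fun _ h => h.lift id fun _ _ ⟨θ, hθ, hU, h⟩ => ⟨θ, hθ, hUW hU, h⟩

theorem sub_mem_of_mem_UpsIn (h : y ∈ UpsIn B ρ a r U x) : y - x ∈ U := by
  induction h with
  | refl => exact sub_self x ▸ U.zero_mem
  | @tail y z _ hyz ih =>
    obtain ⟨θ, -, hθU, hstep⟩ := hyz
    rw [← sub_add_sub_cancel z y x]
    exact U.add_mem (sub_mem_of_mem_upsTheta hθU hstep) ih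

theorem add_mem_UpsIn_add (hν : ν ∈ Uᗮ) (h : y ∈ UpsIn B ρ a r U x) :
    y + ν ∈ UpsIn B ρ a r U (x + ν) :=
  h.lift (· + ν) fun _ _ ⟨θ, hθ, hθU, h⟩ =>
    ⟨θ, hθ, hθU, (add_mem_upsTheta_add_iff (U.inner_left_of_mem_orthogonal hθU hν)).2 h⟩

-- A chain leaving `U` along `θ ∉ U` does so within distance `2 M` of `x`, where `M` is the bound
-- on `‖P_U x‖`, so that `x` itself has a small projection onto `U ⊔ ℝθ`.
theorem exists_norm_projV_le_of_mem_UpsIn (hQ : AngleBound B r Q) (hρ : 0 ≤ ρ)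
    (hdiam : ∀ U < W, ∀ x, ∀ y ∈ UpsIn B ρ a r U x,
      ‖x - y‖ ≤ 2 * ((8 * Q) ^ finrank ℝ U * ρ ^ a))
    (h : y ∈ UpsIn B ρ a r W x) :
    ∃ U ≤ W, IsLatticeSubspace B r U ∧ y ∈ UpsIn B ρ a r U x ∧
      ‖projV U x‖ ≤ (8 * Q) ^ finrank ℝ U * ρ ^ a := by
  induction h with
  | refl =>
    refine ⟨⊥, bot_le, .bot, .refl, ?_⟩
    change ‖(⊥ : Submodule ℝ _).starProjection x‖ ≤ _
    rw [starProjection_bot, zero_apply, norm_zero, finrank_bot, pow_zero, one_mul]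
    exact Real.rpow_nonneg hρ a
  | @tail y z _ hyz ih =>
    obtain ⟨U, hUW, hU, hyU, hxU⟩ := ih
    obtain ⟨θ, hθ, hθW, hstep⟩ := hyz
    by_cases hθU : θ ∈ U
    · exact ⟨U, hUW, hU, hyU.tail ⟨θ, hθ, hθU, hstep⟩, hxU⟩
    refine ⟨U ⊔ span ℝ {θ}, sup_le hUW ((span_singleton_le_iff_mem _ _).2 hθW),
      hU.sup_span_singleton hθ, (UpsIn_mono le_sup_left hyU).tail
        ⟨θ, hθ, mem_sup_right (mem_span_singleton_self θ), hstep⟩, ?_⟩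
    have hQ1 := hQ.one_le
    set M := (8 * Q) ^ finrank ℝ U * ρ ^ a with hM
    have hxy : ‖x - y‖ ≤ 2 * M :=
      hdiam U (lt_of_le_of_ne hUW (ne_of_mem_of_not_mem' hθW hθU).symm) x y hyU
    have hyθ : |⟪y, θ⟫| ≤ M * ‖θ‖ := by
      refine (abs_inner_lt_of_mem_upsTheta ?_ hstep).le.trans ?_
      · exact (ne_of_mem_of_not_mem U.zero_mem hθU).symm
      · gcongr
        exact le_mul_of_one_le_left (Real.rpow_nonneg hρ a) (one_le_pow₀ (by linarith))
    calc ‖projV (U ⊔ span ℝ {θ}) x‖ ≤ 8 * Q * M :=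
          norm_starProjection_sup_span_singleton_le_of_norm_sub_le hQ.one_le
            (hQ.norm_le U hU θ hθ hθU) hxU hxy hyθ
      _ = (8 * Q) ^ finrank ℝ ↥(U ⊔ span ℝ {θ}) * ρ ^ a := by
          rw [hM, finrank_sup_span_singleton hθU, pow_succ']
          ring

theorem norm_sub_le_of_mem_UpsIn (hQ : AngleBound B r Q) (hρ : 0 ≤ ρ)
    (h : y ∈ UpsIn B ρ a r W x) : ‖x - y‖ ≤ 2 * ((8 * Q) ^ finrank ℝ W * ρ ^ a) := by
  induction W using WellFoundedLT.induction generalizing x y with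
  | ind W ih =>
    have hmono : ∀ U ≤ W, (8 * Q) ^ finrank ℝ U * ρ ^ a ≤ (8 * Q) ^ finrank ℝ W * ρ ^ a := by
      intro U hU
      gcongr
      · linarith [hQ.one_le]
      · exact Submodule.finrank_mono hU
    have hdiam := fun U hU x y (hy : y ∈ UpsIn B ρ a r U x) => ih U hU hy
    obtain ⟨U, hUW, -, hyU, hx⟩ := exists_norm_projV_le_of_mem_UpsIn hQ hρ hdiam h
    obtain ⟨V, hVW, -, hxV, hy⟩ := exists_norm_projV_le_of_mem_UpsIn hQ hρ hdiam (mem_UpsIn_symm h)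
    exact norm_sub_le_of_norm_starProjection_le (sub_mem_of_mem_UpsIn (mem_UpsIn_symm hyU))
      (sub_mem_of_mem_UpsIn hxV) (hx.trans (hmono U hUW)) (hy.trans (hmono V hVW))

end Chains

section Stability

/-- The quantitative separation of the scales `ρ ^ α m` that keeps the zones `Ξ(V)` apart:
`ρ ^ α (m + 1)` exceeds `ρ ^ α m` by a factor larger than the one by which resonant chains in
dimension at most `m` can grow. -/
structure SeparatedScales (B : Basis (Fin d) ℝ (EuclideanSpace ℝ (Fin d))) (ρ r Q : ℝ)
    (α : ℕ → ℝ) : Prop extends AngleBound B r Q where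
  pos : 0 < ρ
  gap : ∀ m < d, (8 * Q) ^ (m + 1) * ρ ^ α m < ρ ^ α (m + 1)

variable {B : Basis (Fin d) ℝ (EuclideanSpace ℝ (Fin d))} {ρ r Q t : ℝ} {α : ℕ → ℝ}
  {U V : Submodule ℝ (EuclideanSpace ℝ (Fin d))} {x y η ξ θ : EuclideanSpace ℝ (Fin d)}

theorem mem_Xi2_of_mem_Ups (hx : x ∈ Xi2 B ρ r α U) (h : y ∈ Ups B ρ (α 1) r x) :
    y ∈ Xi2 B ρ r α U := by
  obtain ⟨z, hz, hzx⟩ := hx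
  exact ⟨z, hz, mem_Ups_trans hzx h⟩

theorem mem_Xi_iff : ξ ∈ Xi B ρ r α V ↔ ξ ∈ Xi2 B ρ r α V ∧
    ∀ U, IsLatticeSubspace B r U → finrank ℝ V < finrank ℝ U → ξ ∉ Xi2 B ρ r α U := by
  simp only [Xi, mem_sdiff, mem_iUnion₂, mem_ofPred_eq, not_exists, and_imp, exists_prop, not_and]

theorem mem_Xi_of_mem_Ups (hx : x ∈ Xi B ρ r α V) (h : y ∈ Ups B ρ (α 1) r x) :
    y ∈ Xi B ρ r α V := by
  rw [mem_Xi_iff] at hx ⊢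
  exact ⟨mem_Xi2_of_mem_Ups hx.1 h, fun U hU hVU hy =>
    hx.2 U hU hVU (mem_Xi2_of_mem_Ups hy (mem_Ups_symm h))⟩

-- The projection onto `U ⊇ V` grows along the ray, so if the ray entered `Ξ₁(U)` then `x ∈ Ξ₁(U)`.
theorem notMem_Xi1_add_smul_of_mem_Xi (hx : x ∈ Xi B ρ r α V) (hU : IsLatticeSubspace B r U)
    (hVU : V < U) (ht : 0 ≤ t) : x + t • (x - projV V x) ∉ Xi1 ρ α U := fun hmem =>
  (mem_Xi_iff.1 hx).2 U hU (finrank_lt_finrank_of_lt hVU)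
    ⟨x, (norm_starProjection_le_add_smul_sub hVU.le x ht).trans_lt hmem, .refl⟩

theorem finrank_submodule_euclideanSpace_le (U : Submodule ℝ (EuclideanSpace ℝ (Fin d))) :
    finrank ℝ U ≤ d := by
  simpa only [finrank_euclideanSpace_fin] using U.finrank_le

theorem mem_Xi1_span_singleton (hθ : θ ≠ 0) (h : |⟪y, θ⟫| < ρ ^ α 1 * ‖θ‖) :
    y ∈ Xi1 ρ α (span ℝ {θ}) := by
  have hθ' : 0 < ‖θ‖ := norm_pos_iff.2 hθ
  have hle : ‖projV (span ℝ {θ}) y‖ ≤ |⟪y, θ⟫| / ‖θ‖ :=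
    norm_starProjection_span_singleton_le (by positivity) (div_mul_cancel₀ _ hθ'.ne').ge
  rw [Xi1, mem_ofPred_eq, finrank_span_singleton hθ]
  exact hle.trans_lt ((div_lt_iff₀ hθ').2 h)

namespace SeparatedScales

theorem rpow_le_rpow (h : SeparatedScales B ρ r Q α) {k m : ℕ} (hkm : k ≤ m) (hm : m ≤ d) :
    ρ ^ α k ≤ ρ ^ α m := by
  induction m, hkm using Nat.le_induction with
  | base => rfl
  | succ m _ ih =>
    refine (ih (Nat.le_of_succ_le hm)).trans (le_trans ?_ (h.gap m hm).le)
    exact le_mul_of_one_le_left (Real.rpow_nonneg h.pos.le _)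
      (one_le_pow₀ (by linarith [h.one_le]))

theorem mem_Xi1_sup_span_singleton (h : SeparatedScales B ρ r Q α) (hU : IsLatticeSubspace B r U)
    (hθ : θ ∈ Theta0 B r) (hθU : θ ∉ U) {b : ℝ} (hb : 0 ≤ b) (hyθ : |⟪y, θ⟫| ≤ b * ‖θ‖)
    (hsize : ‖projV U y‖ + b ≤ 4 * ((8 * Q) ^ finrank ℝ U * ρ ^ α (finrank ℝ U))) :
    y ∈ Xi1 ρ α (U ⊔ span ℝ {θ}) := by
  have hfin := finrank_sup_span_singleton hθU
  have hUd : finrank ℝ U < d :=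
    Nat.lt_of_succ_le (hfin.symm.le.trans (finrank_submodule_euclideanSpace_le _))
  have hQ := h.one_le
  have hM : 0 ≤ (8 * Q) ^ finrank ℝ U * ρ ^ α (finrank ℝ U) := by
    have := h.pos
    positivity
  rw [Xi1, mem_ofPred_eq, hfin]
  refine lt_of_le_of_lt ?_ (h.gap _ hUd)
  rw [pow_succ', mul_assoc]
  set M := (8 * Q) ^ finrank ℝ U * ρ ^ α (finrank ℝ U)
  calc ‖projV (U ⊔ span ℝ {θ}) y‖ ≤ ‖projV U y‖ + Q * (‖projV U y‖ + b) :=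
        norm_starProjection_sup_span_singleton_le (by positivity) (h.norm_le U hU θ hθ hθU) hb hyθ
    _ ≤ 1 * (4 * M) + Q * (4 * M) := by
        gcongr
        linarith
    _ ≤ Q * (4 * M) + Q * (4 * M) := by gcongr
    _ = 8 * Q * M := by ring

theorem norm_projV_le_of_mem_UpsIn (h : SeparatedScales B ρ r Q α) (hη : η ∈ Xi1 ρ α V)
    (hx : x ∈ UpsIn B ρ (α 1) r V η) :
    ‖projV V x‖ ≤ 3 * ((8 * Q) ^ finrank ℝ V * ρ ^ α (finrank ℝ V)) := by
  have hρ := h.pos.le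
  have hC : 1 ≤ (8 * Q) ^ finrank ℝ V := one_le_pow₀ (by linarith [h.one_le])
  rcases Nat.eq_zero_or_pos (finrank ℝ V) with hV | hV
  · obtain rfl := Submodule.finrank_eq_zero.1 hV
    change ‖(⊥ : Submodule ℝ _).starProjection x‖ ≤ _
    rw [starProjection_bot, zero_apply, norm_zero]
    positivity
  have hα : ρ ^ α 1 ≤ ρ ^ α (finrank ℝ V) :=
    h.rpow_le_rpow hV (finrank_submodule_euclideanSpace_le V)
  calc ‖projV V x‖ ≤ ‖projV V η‖ + ‖x - η‖ := norm_starProjection_le_add_norm_sub V x η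
    _ ≤ ρ ^ α (finrank ℝ V) + 2 * ((8 * Q) ^ finrank ℝ V * ρ ^ α 1) := by
        gcongr
        · exact hη.le
        · rw [norm_sub_rev]
          exact norm_sub_le_of_mem_UpsIn h.toAngleBound hρ hx
    _ ≤ (8 * Q) ^ finrank ℝ V * ρ ^ α (finrank ℝ V)
          + 2 * ((8 * Q) ^ finrank ℝ V * ρ ^ α (finrank ℝ V)) := by
        gcongr
        exact le_mul_of_one_le_left (by positivity) hC
    _ = 3 * ((8 * Q) ^ finrank ℝ V * ρ ^ α (finrank ℝ V)) := by ring

theorem mem_Xi1_sup_span_singleton_of_mem_layer (h : SeparatedScales B ρ r Q α)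
    (hV : IsLatticeSubspace B r V)
    (hy : ‖projV V y‖ ≤ 3 * ((8 * Q) ^ finrank ℝ V * ρ ^ α (finrank ℝ V)))
    (hθ : θ ∈ Theta0 B r) (hθV : θ ∉ V) (hyθ : y ∈ layer ρ (α 1) θ) :
    y ∈ Xi1 ρ α (V ⊔ span ℝ {θ}) := by
  have hθ0 : θ ≠ 0 := (ne_of_mem_of_not_mem V.zero_mem hθV).symm
  have hyθ := hyθ.resolve_left hθ0
  rcases Nat.eq_zero_or_pos (finrank ℝ V) with hV0 | hV0
  · rw [Submodule.finrank_eq_zero.1 hV0, bot_sup_eq]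
    exact mem_Xi1_span_singleton hθ0 hyθ
  have hρ := h.pos
  have hα : ρ ^ α 1 ≤ (8 * Q) ^ finrank ℝ V * ρ ^ α (finrank ℝ V) :=
    (h.rpow_le_rpow hV0 (finrank_submodule_euclideanSpace_le V)).trans
      (le_mul_of_one_le_left (by positivity) (one_le_pow₀ (by linarith [h.one_le])))
  exact h.mem_Xi1_sup_span_singleton hV hθ hθV (by positivity) hyθ.le (by linarith)

theorem exists_gt_mem_Xi1 (h : SeparatedScales B ρ r Q α) (hV : IsLatticeSubspace B r V)
    (hy : ‖projV V y‖ ≤ 3 * ((8 * Q) ^ finrank ℝ V * ρ ^ α (finrank ℝ V)))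
    (hU : IsLatticeSubspace B r U) (hVU : finrank ℝ V < finrank ℝ U) (hyU : y ∈ Xi1 ρ α U) :
    ∃ W > V, IsLatticeSubspace B r W ∧ y ∈ Xi1 ρ α W := by
  induction U using WellFoundedGT.induction with
  | ind U ih =>
    by_cases hle : V ≤ U
    · exact ⟨U, lt_of_le_of_ne hle fun he => hVU.ne (he ▸ rfl), hU, hyU⟩
    obtain ⟨θ, hθ, hθV, hθU⟩ := hV.exists_mem_Theta0_notMem hle
    have hlt : U < U ⊔ span ℝ {θ} := left_lt_sup.2 (by rwa [span_singleton_le_iff_mem])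
    refine ih _ hlt (hU.sup_span_singleton hθ) (hVU.trans (finrank_lt_finrank_of_lt hlt)) ?_
    refine h.mem_Xi1_sup_span_singleton hU hθ hθU (norm_nonneg _)
      (abs_inner_le_norm_starProjection_mul y hθV) ?_
    have hQ := h.one_le
    have hρ := h.pos
    have hα : ρ ^ α (finrank ℝ V) ≤ ρ ^ α (finrank ℝ U) :=
      h.rpow_le_rpow hVU.le (finrank_submodule_euclideanSpace_le U)
    calc ‖projV U y‖ + ‖projV V y‖
        ≤ 1 * ρ ^ α (finrank ℝ U) + 3 * ((8 * Q) ^ finrank ℝ V * ρ ^ α (finrank ℝ V)) := by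
          rw [one_mul]
          exact add_le_add (le_of_lt hyU) hy
      _ ≤ (8 * Q) ^ finrank ℝ U * ρ ^ α (finrank ℝ U)
            + 3 * ((8 * Q) ^ finrank ℝ U * ρ ^ α (finrank ℝ U)) := by
          gcongr
          · exact one_le_pow₀ (by linarith)
          · linarith
      _ = 4 * ((8 * Q) ^ finrank ℝ U * ρ ^ α (finrank ℝ U)) := by ring

theorem exists_mem_UpsIn_of_mem_Ups_add_smul (h : SeparatedScales B ρ r Q α)
    (hV : IsLatticeSubspace B r V) (hηV : η ∈ Xi1 ρ α V) (hη : η ∈ Xi B ρ r α V) (ht : 0 ≤ t)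
    (hy : y ∈ Ups B ρ (α 1) r (η + t • (η - projV V η))) :
    ∃ x ∈ UpsIn B ρ (α 1) r V η, y = x + t • (x - projV V x) := by
  induction hy with
  | refl => exact ⟨η, .refl, rfl⟩
  | @tail y z _ hyz ih =>
    obtain ⟨x, hx, rfl⟩ := ih
    obtain ⟨θ, hθ, hstep⟩ := hyz
    have hνV : t • (x - projV V x) ∈ Vᗮ :=
      smul_mem _ t (V.sub_starProjection_mem_orthogonal x)
    by_cases hθV : θ ∈ V
    · set ν := t • (x - projV V x) with hν
      have hxz : z - ν ∈ upsTheta ρ (α 1) θ x := by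
        rwa [← add_mem_upsTheta_add_iff (V.inner_left_of_mem_orthogonal hθV hνV), sub_add_cancel]
      refine ⟨z - ν, hx.tail ⟨θ, hθ, hθV, hxz⟩, ?_⟩
      have hperp : z - ν - projV V (z - ν) = x - projV V x :=
        sub_starProjection_eq_of_sub_mem (sub_mem_of_mem_upsTheta hθV hxz)
      rw [hperp, ← hν, sub_add_cancel]
    · refine absurd (h.mem_Xi1_sup_span_singleton_of_mem_layer hV ?_ hθ hθV hstep.1)
        (notMem_Xi1_add_smul_of_mem_Xi (mem_Xi_of_mem_Ups hη (UpsIn_subset_Ups hx))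
          (hV.sup_span_singleton hθ) (left_lt_sup.2 ?_) ht)
      · have hproj : projV V (x + t • (x - projV V x)) = projV V x :=
          starProjection_add_smul_sub_starProjection V x x t
        rw [hproj]
        exact h.norm_projV_le_of_mem_UpsIn hηV hx
      · rwa [span_singleton_le_iff_mem]

theorem add_smul_mem_Xi_of_mem_Xi1 (h : SeparatedScales B ρ r Q α) (hV : IsLatticeSubspace B r V)
    (hηV : η ∈ Xi1 ρ α V) (hη : η ∈ Xi B ρ r α V) (ht : 0 ≤ t) :
    η + t • (η - projV V η) ∈ Xi B ρ r α V := by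
  have hproj : ∀ x, projV V (x + t • (x - projV V x)) = projV V x := fun x =>
    starProjection_add_smul_sub_starProjection V x x t
  refine mem_Xi_iff.2 ⟨⟨_, ?_, .refl⟩, ?_⟩
  · rwa [Xi1, mem_ofPred_eq, hproj]
  rintro U hU hVU ⟨ζ, hζU, hζ⟩
  obtain ⟨x, hx, rfl⟩ := h.exists_mem_UpsIn_of_mem_Ups_add_smul hV hηV hη ht (mem_Ups_symm hζ)
  obtain ⟨W, hVW, hW, hxW⟩ := h.exists_gt_mem_Xi1 hV
    (by rw [hproj]; exact h.norm_projV_le_of_mem_UpsIn hηV hx) hU hVU hζU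
  exact notMem_Xi1_add_smul_of_mem_Xi (mem_Xi_of_mem_Ups hη (UpsIn_subset_Ups hx)) hW hVW ht hxW

theorem add_smul_mem_Xi (h : SeparatedScales B ρ r Q α) (hV : IsLatticeSubspace B r V)
    (hξ : ξ ∈ Xi B ρ r α V) (ht : 0 ≤ t) : ξ + t • (ξ - projV V ξ) ∈ Xi B ρ r α V := by
  obtain ⟨η, hηV, hηξ⟩ := hξ.1
  have hη : η ∈ Xi B ρ r α V := mem_Xi_of_mem_Ups hξ (mem_Ups_symm hηξ)
  have hchain : ξ ∈ UpsIn B ρ (α 1) r V η := by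
    obtain ⟨x, hx, rfl⟩ := h.exists_mem_UpsIn_of_mem_Ups_add_smul (t := 0) hV hηV hη le_rfl
      (by rwa [zero_smul, add_zero])
    rwa [zero_smul, add_zero]
  have hperp : ξ - projV V ξ = η - projV V η :=
    sub_starProjection_eq_of_sub_mem (sub_mem_of_mem_UpsIn hchain)
  rw [hperp]
  exact mem_Xi_of_mem_Ups (h.add_smul_mem_Xi_of_mem_Xi1 hV hηV hη ht) <| UpsIn_subset_Ups <|
    add_mem_UpsIn_add (smul_mem _ t (V.sub_starProjection_mem_orthogonal η)) hchain

end SeparatedScales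

theorem eventually_mul_rpow_lt_rpow (C : ℝ) {a b : ℝ} (hab : a < b) :
    ∀ᶠ ρ : ℝ in Filter.atTop, C * ρ ^ a < ρ ^ b := by
  filter_upwards [(tendsto_rpow_atTop (sub_pos.2 hab)).eventually_gt_atTop C,
    Filter.eventually_gt_atTop 0] with ρ hC hρ
  calc C * ρ ^ a < ρ ^ (b - a) * ρ ^ a := by gcongr
    _ = ρ ^ b := by rw [← Real.rpow_add hρ, sub_add_cancel]

theorem eventually_exists_separatedScales (B : Basis (Fin d) ℝ (EuclideanSpace ℝ (Fin d)))
    {κ : ℝ} (hκ : 0 < κ) (hα : ∀ m < d, α m + κ * d * (m + 1) < α (m + 1)) :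
    ∀ᶠ ρ : ℝ in Filter.atTop, ∃ Q, ∀ r ≤ ρ ^ κ, SeparatedScales B ρ r Q α := by
  obtain ⟨K, hK⟩ := exists_eventually_angleBound B
  have hgap : ∀ᶠ ρ : ℝ in Filter.atTop, ∀ m < d,
      (8 * K) ^ (m + 1) * ρ ^ (α m + κ * d * (m + 1)) < ρ ^ α (m + 1) :=
    (Set.finite_Iio d).eventually_all.2 fun m hm => eventually_mul_rpow_lt_rpow _ (hα m hm)
  filter_upwards [(tendsto_rpow_atTop hκ).eventually hK, hgap, Filter.eventually_gt_atTop 0]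
    with ρ hangle hgap hρ
  refine ⟨K * (ρ ^ κ) ^ d, fun r hr => ⟨hangle.mono hr, hρ, fun m hm => ?_⟩⟩
  have hpow : ((ρ ^ κ) ^ d) ^ (m + 1) = ρ ^ (κ * d * (m + 1)) := by
    rw [← Nat.cast_succ, Real.rpow_mul_natCast hρ.le, Real.rpow_mul_natCast hρ.le]
  calc (8 * (K * (ρ ^ κ) ^ d)) ^ (m + 1) * ρ ^ α m
      = (8 * K) ^ (m + 1) * ρ ^ (α m + κ * d * (m + 1)) := by
        rw [← mul_assoc, mul_pow, hpow, add_comm (α m), Real.rpow_add hρ, mul_assoc]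
    _ < ρ ^ α (m + 1) := hgap m hm

end Stability

theorem Xi_stable_along_perp_ray_general (B : Basis (Fin d) ℝ (EuclideanSpace ℝ (Fin d)))
    {κ : ℝ} (hκ : 0 < κ) {α : ℕ → ℝ} (hα : ∀ m < d, α m + κ * d * (m + 1) < α (m + 1)) :
    ∀ᶠ ρ : ℝ in Filter.atTop, ∀ r ≤ ρ ^ κ, ∀ V : Submodule ℝ (EuclideanSpace ℝ (Fin d)),
      IsLatticeSubspace B r V → ∀ ξ ∈ Xi B ρ r α V, ∀ t : ℝ, 0 ≤ t →
        ξ + t • (ξ - projV V ξ) ∈ Xi B ρ r α V := by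
  filter_upwards [eventually_exists_separatedScales B hκ hα] with ρ hρ r hr V hV ξ hξ t ht
  obtain ⟨Q, hQ⟩ := hρ
  exact (hQ r hr).add_smul_mem_Xi hV hξ ht

theorem GoodParams.gap {B : Basis (Fin d) ℝ (EuclideanSpace ℝ (Fin d))} {ρ r κ : ℝ} {α : ℕ → ℝ}
    (h : GoodParams B ρ r κ α) {m : ℕ} (hm : m < d) : α m + κ * d * (m + 1) < α (m + 1) := by
  obtain ⟨-, hκ, -, hα, -⟩ := h
  have hmd : (m + 1 : ℝ) ≤ d := by exact_mod_cast hm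
  calc α m + κ * d * (m + 1) ≤ α m + κ * d * d := by gcongr
    _ ≤ α m + 2 * κ * d ^ 2 := by linarith [show 0 ≤ κ * d * d by positivity]
    _ < α (m + 1) := hα m hm

/-- Lemma 5.20: for sufficiently large ρ, if ξ ∈ Ξ(V) and ν = ξ_{V^⊥},
then ξ + tν ∈ Ξ(V) for all t ≥ 0. -/
theorem Xi_stable_along_perp_ray
    (d : ℕ) (hd : 2 ≤ d) (B : Basis (Fin d) ℝ (EuclideanSpace ℝ (Fin d)))
    (κ : ℝ) (α : ℕ → ℝ) :
    ∃ ρ₀ : ℝ, ∀ ρ r : ℝ, ρ₀ ≤ ρ → GoodParams B ρ r κ α →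
      ∀ n : ℕ, n ≤ d →
      ∀ V : Submodule ℝ (EuclideanSpace ℝ (Fin d)), IsLatticeSubspace B r V →
        Module.finrank ℝ V = n →
      ∀ ξ ∈ Xi B ρ r α V,
      ∀ t : ℝ, 0 ≤ t →
        ξ + t • (ξ - projV V ξ) ∈ Xi B ρ r α V := by
  by_cases hex : ∃ ρ r, GoodParams B ρ r κ α
  · obtain ⟨_, _, hgood⟩ := hex
    obtain ⟨ρ₀, hρ₀⟩ := Filter.eventually_atTop.1
      (Xi_stable_along_perp_ray_general B hgood.2.1 fun _ => hgood.gap)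
    exact ⟨ρ₀, fun ρ r hρ ⟨_, _, _, _, _, hr, _⟩ _ _ V hV _ => hρ₀ ρ hρ r hr V hV⟩
  · exact ⟨0, fun ρ r _ hG => absurd ⟨ρ, r, hG⟩ hex⟩
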